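/- arXiv:2401.16439 — 2 statements merged into one kernel-verified Lean document; each statement's English description precedes it below -/
import Mathlib

section
/- Let D be a probability measure on ℝ^d, let c : ℝ^d → {−1,+1} be measurable, let μ ∈ (0,1], and let H_μ^D be a nonempty collection of halfspaces h with P_{x∼D}{h(x)=1} = μ. Let opt_min = inf_{h∈H_μ^D} P{c(x)=h(x)} and opt_max = sup_{h∈H_μ^D} P{c(x)=h(x)}, and suppose h* ∈ H_μ^D attains γ* = max_{h∈H_μ^D} μ·|d_D(c,h)|. If ε ≥ 0 and h_v, h_u ∈ H_μ^D satisfy P{c(x)=h_v(x)} ≤ opt_min + 2ε and P{c(x)=h_u(x)} ≥ opt_max − 2ε, then either μ·|d_D(c,h_v)| ≥ γ* − ε or μ·|d_D(c,h_u)| ≥ γ* − ε. -/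
open MeasureTheory
open scoped RealInnerProductSpace

/-- Statistical parity deviation `d_D(c,g) = P{c=1} − P{c=1 | g=1}`. -/
noncomputable def dev {d : ℕ} (D : Measure (EuclideanSpace ℝ (Fin d)))
    (c g : EuclideanSpace ℝ (Fin d) → ℝ) : ℝ :=
  (D {x | c x = 1}).toReal -
    (D {x | c x = 1 ∧ g x = 1}).toReal / (D {x | g x = 1}).toReal

/-- The halfspace `x ↦ +1` if `⟨w,x⟩ ≥ t`, `−1` otherwise. -/
noncomputable def halfspace {d : ℕ} (w : EuclideanSpace ℝ (Fin d)) (t : ℝ) :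
    EuclideanSpace ℝ (Fin d) → ℝ :=
  fun x => if t ≤ ⟪w, x⟫ then 1 else -1

/-! With the mass `μ` of the subgroup `{g = 1}` fixed, counting gives
`P{c = g} = 1 - P{c = 1} - μ + 2 P{c = 1, g = 1}`, while
`μ d(c, g) = μ P{c = 1} - P{c = 1, g = 1}`. So the agreement of `g` with `c` is a constant minus
`2 μ d(c, g)`: minimizing the agreement maximizes the deviation, maximizing the agreement minimizes
it, and the sign of `d(c, h*)` decides which of the two extremes competes with `h*`. -/

section Classifier

open scoped symmDiff

variable {Ω : Type*} [MeasurableSpace Ω] {D : Measure Ω} {c g h : Ω → ℝ} {μ ε : ℝ}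

/-- A binary classifier, encoded as a measurable real-valued function with values in `{-1, 1}`. -/
structure IsClassifier (c : Ω → ℝ) : Prop where
  measurable : Measurable c
  eq_one_or_eq_neg_one : ∀ x, c x = 1 ∨ c x = -1

/-- The mass of the region where `c` and `g` agree: the objective of an agnostic learner. -/
noncomputable def agreement (D : Measure Ω) (c g : Ω → ℝ) : ℝ :=
  D.real {x | c x = g x}

/-- The statistical-parity deviation of `c` on the subgroup `{g = 1}` of an arbitrary measurable
space; `dev` is its instance on Euclidean space. The conditional probability is a quotient, hence
`0` when `{g = 1}` is null. -/
noncomputable def parityDeviation (D : Measure Ω) (c g : Ω → ℝ) : ℝ :=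
  D.real {x | c x = 1} - D.real {x | c x = 1 ∧ g x = 1} / D.real {x | g x = 1}

theorem measureReal_symmDiff_add_two_mul_inter [IsFiniteMeasure D] {s t : Set Ω}
    (hs : MeasurableSet s) (ht : MeasurableSet t) :
    D.real (s ∆ t) + 2 * D.real (s ∩ t) = D.real s + D.real t := by
  have h_symmDiff : D.real (s ∆ t) = D.real (s \ t) + D.real (t \ s) :=
    measureReal_symmDiff_eq hs ht
  have h_left : D.real (s ∩ t) + D.real (s \ t) = D.real s := measureReal_inter_add_sdiff ht
  have h_right : D.real (s ∩ t) + D.real (t \ s) = D.real t := by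
    rw [Set.inter_comm]
    exact measureReal_inter_add_sdiff hs
  linarith

namespace IsClassifier

theorem measurableSet_eq_one (hc : IsClassifier c) : MeasurableSet {x | c x = 1} :=
  hc.measurable (measurableSet_singleton 1)

theorem setOf_eq_eq_compl_symmDiff (hc : IsClassifier c) (hg : IsClassifier g) :
    {x | c x = g x} = ({x | c x = 1} ∆ {x | g x = 1})ᶜ := by
  ext x
  rcases hc.eq_one_or_eq_neg_one x with hcx | hcx <;>
    rcases hg.eq_one_or_eq_neg_one x with hgx | hgx <;>
    norm_num [Set.mem_symmDiff, hcx, hgx]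

theorem agreement_eq [IsFiniteMeasure D] (hc : IsClassifier c) (hg : IsClassifier g) :
    agreement D c g = D.real Set.univ - D.real {x | c x = 1} - D.real {x | g x = 1} +
      2 * D.real {x | c x = 1 ∧ g x = 1} := by
  have h_compl : agreement D c g =
      D.real Set.univ - D.real ({x | c x = 1} ∆ {x | g x = 1}) := by
    rw [agreement, hc.setOf_eq_eq_compl_symmDiff hg,
      measureReal_compl (hc.measurableSet_eq_one.symmDiff hg.measurableSet_eq_one)]
  have h_symmDiff := measureReal_symmDiff_add_two_mul_inter (D := D)
    hc.measurableSet_eq_one hg.measurableSet_eq_one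
  rw [← Set.ofPred_and] at h_symmDiff
  linarith

end IsClassifier

theorem mul_parityDeviation (hμ : μ ≠ 0) (hg_mass : D.real {x | g x = 1} = μ) :
    μ * parityDeviation D c g =
      μ * D.real {x | c x = 1} - D.real {x | c x = 1 ∧ g x = 1} := by
  rw [parityDeviation, hg_mass, mul_sub, mul_div_cancel₀ _ hμ]

theorem agreement_sub_agreement [IsFiniteMeasure D] (hμ : μ ≠ 0) (hc : IsClassifier c)
    (hg : IsClassifier g) (hg_mass : D.real {x | g x = 1} = μ)
    (hh : IsClassifier h) (hh_mass : D.real {x | h x = 1} = μ) :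
    agreement D c g - agreement D c h =
      2 * (μ * parityDeviation D c h - μ * parityDeviation D c g) := by
  rw [hc.agreement_eq hg, hc.agreement_eq hh, mul_parityDeviation hμ hg_mass,
    mul_parityDeviation hμ hh_mass, hg_mass, hh_mass]
  ring

theorem sInf_agreement_le {H : Set (Ω → ℝ)} (hh : h ∈ H) :
    sInf (agreement D c '' H) ≤ agreement D c h :=
  csInf_le ⟨0, Set.forall_mem_image.2 fun _ _ ↦ measureReal_nonneg⟩ (Set.mem_image_of_mem _ hh)

theorem le_sSup_agreement [IsFiniteMeasure D] {H : Set (Ω → ℝ)} (hh : h ∈ H) :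
    agreement D c h ≤ sSup (agreement D c '' H) :=
  le_csSup ⟨D.real Set.univ, Set.forall_mem_image.2 fun _ _ ↦ measureReal_mono (Set.subset_univ _)⟩
    (Set.mem_image_of_mem _ hh)

theorem stmt_5_general [IsFiniteMeasure D] (hc : IsClassifier c) (hμ : 0 < μ)
    {H : Set (Ω → ℝ)} (hH : ∀ g ∈ H, IsClassifier g ∧ D.real {x | g x = 1} = μ)
    {v u : Ω → ℝ} (hh : h ∈ H) (hv : v ∈ H) (hu : u ∈ H)
    (hv_min : agreement D c v ≤ sInf (agreement D c '' H) + 2 * ε)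
    (hu_max : sSup (agreement D c '' H) - 2 * ε ≤ agreement D c u) :
    μ * |parityDeviation D c h| - ε ≤ μ * |parityDeviation D c v| ∨
      μ * |parityDeviation D c h| - ε ≤ μ * |parityDeviation D c u| := by
  have agreement_sub {g : Ω → ℝ} (hg : g ∈ H) : agreement D c g - agreement D c h =
      2 * (μ * parityDeviation D c h - μ * parityDeviation D c g) :=
    agreement_sub_agreement hμ.ne' hc (hH g hg).1 (hH g hg).2 (hH h hh).1 (hH h hh).2
  rcases le_total 0 (parityDeviation D c h) with h_nonneg | h_nonpos
  · left
    calc μ * |parityDeviation D c h| - ε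
        = μ * parityDeviation D c h - ε := by rw [abs_of_nonneg h_nonneg]
      _ ≤ μ * parityDeviation D c v := by
        linarith [agreement_sub hv, sInf_agreement_le (D := D) (c := c) hh]
      _ ≤ μ * |parityDeviation D c v| := by gcongr; exact le_abs_self _
  · right
    calc μ * |parityDeviation D c h| - ε
        = μ * -parityDeviation D c h - ε := by rw [abs_of_nonpos h_nonpos]
      _ ≤ μ * -parityDeviation D c u := by
        linarith [agreement_sub hu, le_sSup_agreement (D := D) (c := c) hh]
      _ ≤ μ * |parityDeviation D c u| := by gcongr; exact neg_le_abs _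

end Classifier

section Halfspace

variable {d : ℕ}

theorem isClassifier_halfspace (w : EuclideanSpace ℝ (Fin d)) (t : ℝ) :
    IsClassifier (halfspace w t) where
  measurable := Measurable.ite (measurableSet_le measurable_const (by fun_prop))
    measurable_const measurable_const
  eq_one_or_eq_neg_one _ := ite_eq_or_eq _ _ _

/-- The class `H_μ^D` of halfspaces of mass `μ`; the normal vector is required to be nonzero, which
excludes the constant classifiers. -/
def halfspacesOfMass (D : Measure (EuclideanSpace ℝ (Fin d))) (μ : ℝ) :
    Set (EuclideanSpace ℝ (Fin d) → ℝ) :=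
  {g | ∃ w ≠ 0, ∃ t, D.real {x | halfspace w t x = 1} = μ ∧ halfspace w t = g}

theorem isClassifier_and_mass_of_mem_halfspacesOfMass {D : Measure (EuclideanSpace ℝ (Fin d))}
    {μ : ℝ} {g : EuclideanSpace ℝ (Fin d) → ℝ} (hg : g ∈ halfspacesOfMass D μ) :
    IsClassifier g ∧ D.real {x | g x = 1} = μ := by
  obtain ⟨w, -, t, h_mass, rfl⟩ := hg
  exact ⟨isClassifier_halfspace w t, h_mass⟩

theorem agreement_image_halfspacesOfMass (D : Measure (EuclideanSpace ℝ (Fin d)))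
    (c : EuclideanSpace ℝ (Fin d) → ℝ) (μ : ℝ) :
    agreement D c '' halfspacesOfMass D μ =
      {r : ℝ | ∃ w : EuclideanSpace ℝ (Fin d), w ≠ 0 ∧ ∃ t : ℝ,
        (D {x | halfspace w t x = 1}).toReal = μ ∧
        r = (D {x | c x = halfspace w t x}).toReal} := by
  ext r
  constructor
  · rintro ⟨_, ⟨w, hw, t, h_mass, rfl⟩, rfl⟩
    exact ⟨w, hw, t, h_mass, rfl⟩
  · rintro ⟨w, hw, t, h_mass, rfl⟩
    exact ⟨halfspace w t, ⟨w, hw, t, h_mass, rfl⟩, rfl⟩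

end Halfspace

/-- Lemma 3.5: near-optimal agnostic learners (near-minimal or near-maximal
agreement with `c` over the halfspaces of mass `μ`) yield a near-maximally
unfair subgroup. -/
theorem stmt_5 {d : ℕ} (D : Measure (EuclideanSpace ℝ (Fin d))) [IsProbabilityMeasure D]
    (c : EuclideanSpace ℝ (Fin d) → ℝ) (hc : Measurable c)
    (hcval : ∀ x, c x = 1 ∨ c x = -1)
    (μ : ℝ) (hμ : 0 < μ) (hμ1 : μ ≤ 1)
    -- agreement values over H_μ^D
    (optmin optmax : ℝ)
    (hoptmin : optmin = sInf {r : ℝ | ∃ w : EuclideanSpace ℝ (Fin d), w ≠ 0 ∧ ∃ t : ℝ,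
      (D {x | halfspace w t x = 1}).toReal = μ ∧
      r = (D {x | c x = halfspace w t x}).toReal})
    (hoptmax : optmax = sSup {r : ℝ | ∃ w : EuclideanSpace ℝ (Fin d), w ≠ 0 ∧ ∃ t : ℝ,
      (D {x | halfspace w t x = 1}).toReal = μ ∧
      r = (D {x | c x = halfspace w t x}).toReal})
    -- h* ∈ H_μ^D attains the maximal weighted unfairness γ*
    (wS : EuclideanSpace ℝ (Fin d)) (hwS : wS ≠ 0) (tS : ℝ)
    (hmassS : (D {x | halfspace wS tS x = 1}).toReal = μ)
    (γS : ℝ) (hγS : γS = μ * |dev D c (halfspace wS tS)|)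
    (hSopt : ∀ w : EuclideanSpace ℝ (Fin d), w ≠ 0 → ∀ t : ℝ,
      (D {x | halfspace w t x = 1}).toReal = μ →
      μ * |dev D c (halfspace w t)| ≤ γS)
    (ε : ℝ) (hε : 0 ≤ ε)
    -- h_v, h_u ∈ H_μ^D near-minimizing resp. near-maximizing the agreement
    (wv : EuclideanSpace ℝ (Fin d)) (hwv : wv ≠ 0) (tv : ℝ)
    (hmassv : (D {x | halfspace wv tv x = 1}).toReal = μ)
    (wu : EuclideanSpace ℝ (Fin d)) (hwu : wu ≠ 0) (tu : ℝ)
    (hmassu : (D {x | halfspace wu tu x = 1}).toReal = μ)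
    (hv : (D {x | c x = halfspace wv tv x}).toReal ≤ optmin + 2 * ε)
    (hu : (D {x | c x = halfspace wu tu x}).toReal ≥ optmax - 2 * ε) :
    μ * |dev D c (halfspace wv tv)| ≥ γS - ε ∨
      μ * |dev D c (halfspace wu tu)| ≥ γS - ε := by
  rw [← agreement_image_halfspacesOfMass] at hoptmin hoptmax
  subst hoptmin hoptmax hγS
  exact stmt_5_general ⟨hc, hcval⟩ hμ (fun _ ↦ isClassifier_and_mass_of_mem_halfspacesOfMass)
    ⟨wS, hwS, tS, hmassS, rfl⟩ ⟨wv, hwv, tv, hmassv, rfl⟩ ⟨wu, hwu, tu, hmassu, rfl⟩ hv hu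
end

section
/- Let D be a probability measure on ℝ^d whose one-dimensional marginals have continuous cumulative distribution functions, let c : ℝ^d → {−1,+1} be measurable, let 0 < a ≤ b < 1, let n be a positive integer, and let ε ≥ 0. Suppose that for each k ∈ {0,…,n} there is a halfspace h_k with P{h_k(x)=1} = α(k) = a + k(b−a)/n such that P{h_k(x)=1}·|d_D(c,h_k)| ≥ γ_k − ε, where γ_k is the supremum of P{h(x)=1}·|d_D(c,h)| over halfspaces h with P{h(x)=1} = α(k). Then max_{0≤k≤n} P{h_k(x)=1}·|d_D(c,h_k)| ≥ γ* − 2(b−a)/n − ε, where γ* is the supremum of P{h(x)=1}·|d_D(c,h)| over all halfspaces h with a ≤ P{h(x)=1} ≤ b. -/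
open MeasureTheory
open scoped RealInnerProductSpace

/-- Weighted unfairness `P{h=1}·|d_D(c,h)|`. -/
noncomputable def unf {d : ℕ} (D : Measure (EuclideanSpace ℝ (Fin d)))
    (c h : EuclideanSpace ℝ (Fin d) → ℝ) : ℝ :=
  (D {x | h x = 1}).toReal * |dev D c h|

/-!
Clearing the denominator in the conditional probability, the weighted unfairness of a group `S` is
`|P(C) P(S) - P(C ∩ S)|` with `C = {c = 1}`. Enlarging `S` by a set of mass `δ` changes both
terms by an amount in `[0, δ]`, so this quantity is `1`-Lipschitz in the mass along a nested
family, such as the halfspaces with a fixed normal vector. Continuity of the marginals lets us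
translate any halfspace until its mass is a prescribed `α ∈ (0, 1)`, and moving the mass to the
nearest grid point costs at most half the mesh `(b - a) / n`.
-/

section ParityGap

variable {Ω : Type*} [MeasurableSpace Ω] {μ : Measure Ω} [IsProbabilityMeasure μ] {C S T : Set Ω}

/-- The distance `|P(C) P(S) - P(C ∩ S)|` of the events `C` and `S` from independence: the weighted
unfairness of the group `S` for a classifier that is positive on `C`, without the division
by `P(S)`. -/
noncomputable def parityGap (μ : Measure Ω) (C S : Set Ω) : ℝ :=
  |μ.real C * μ.real S - μ.real (C ∩ S)|

lemma parityGap_le_one : parityGap μ C S ≤ 1 :=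
  abs_sub_le_of_nonneg_of_le (by positivity)
    (mul_le_one₀ measureReal_le_one measureReal_nonneg measureReal_le_one)
    measureReal_nonneg measureReal_le_one

lemma abs_parityGap_sub_le_of_subset (hST : S ⊆ T) (hS : MeasurableSet S) :
    |parityGap μ C T - parityGap μ C S| ≤ μ.real T - μ.real S := by
  have hinter : μ.real (C ∩ T) - μ.real (C ∩ S) = μ.real (C ∩ (T \ S)) := by
    rw [← measureReal_inter_add_sdiff (s := C ∩ T) hS, Set.inter_assoc,
      Set.inter_eq_self_of_subset_right hST, Set.inter_sdiff_assoc, add_sub_cancel_left]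
  rw [← measureReal_sdiff hST hS]
  calc |parityGap μ C T - parityGap μ C S|
      ≤ |(μ.real C * μ.real T - μ.real (C ∩ T)) - (μ.real C * μ.real S - μ.real (C ∩ S))| :=
        abs_abs_sub_abs_le _ _
    _ = |μ.real C * μ.real (T \ S) - μ.real (C ∩ (T \ S))| := by
        rw [← hinter, measureReal_sdiff hST hS]
        ring_nf
    _ ≤ μ.real (T \ S) :=
        abs_sub_le_of_nonneg_of_le (by positivity)
          (mul_le_of_le_one_left measureReal_nonneg measureReal_le_one)
          measureReal_nonneg (measureReal_mono Set.inter_subset_right)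

end ParityGap

lemma exists_measureReal_le_eq_of_continuous {Ω : Type*} [MeasurableSpace Ω] {μ : Measure Ω}
    [IsProbabilityMeasure μ] {X : Ω → ℝ} (hX : Measurable X)
    (hcont : Continuous fun t => μ.real {ω | X ω ≤ t}) {α : ℝ} (hα : α ∈ Set.Ioo 0 1) :
    ∃ t, μ.real {ω | X ω ≤ t} = α := by
  have : IsProbabilityMeasure (μ.map X) := Measure.isProbabilityMeasure_map hX.aemeasurable
  have hcdf : (fun t => μ.real {ω | X ω ≤ t}) = ProbabilityTheory.cdf (μ.map X) := by
    ext t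
    rw [ProbabilityTheory.cdf_eq_real, map_measureReal_apply hX measurableSet_Iic]
    rfl
  refine mem_range_of_exists_le_of_exists_ge hcont ?_ ?_ <;> simp only [congrFun hcdf]
  · exact ((ProbabilityTheory.tendsto_cdf_atBot _).eventually_le_const hα.1).exists
  · exact ((ProbabilityTheory.tendsto_cdf_atTop _).eventually_const_le hα.2).exists

lemma grid_mem_Icc {a b : ℝ} (hab : a ≤ b) {k n : ℕ} (hkn : k ≤ n) :
    a + k * (b - a) / n ∈ Set.Icc a b := by
  have hratio : (k : ℝ) / n ≤ 1 := div_le_one_of_le₀ (by exact_mod_cast hkn) n.cast_nonneg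
  have hratio0 : 0 ≤ (k : ℝ) / n := by positivity
  rw [mul_div_right_comm]
  constructor <;> nlinarith

lemma exists_abs_sub_grid_le {a b m : ℝ} (hm : m ∈ Set.Icc a b) {n : ℕ} (hn : 0 < n) :
    ∃ k ≤ n, |m - (a + k * (b - a) / n)| ≤ (b - a) / (2 * n) := by
  have hab : a ≤ b := hm.1.trans hm.2
  rw [← segment_eq_Icc hab, segment_eq_image'] at hm
  obtain ⟨r, ⟨hr0, hr1⟩, rfl⟩ := hm
  have hn' : (0 : ℝ) < n := by exact_mod_cast hn
  set k := ⌊r * n + 1 / 2⌋₊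
  have hk_le : (k : ℝ) ≤ r * n + 1 / 2 := Nat.floor_le (by positivity)
  have hlt_k : r * n + 1 / 2 < k + 1 := Nat.lt_floor_add_one _
  have hkn : k ≤ n := by
    have : (k : ℝ) < n + 1 := by nlinarith
    exact Nat.lt_succ_iff.mp (by exact_mod_cast this)
  refine ⟨k, hkn, ?_⟩
  calc |a + r • (b - a) - (a + k * (b - a) / n)| = |(r * n - k) * ((b - a) / n)| := by
        congr 1
        field_simp
        simp only [smul_eq_mul]
        ring
    _ = |r * n - k| * ((b - a) / n) := by
        rw [abs_mul, abs_of_nonneg (div_nonneg (sub_nonneg.mpr hab) hn'.le)]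
    _ ≤ 1 / 2 * ((b - a) / n) := by
        have hdist : |r * n - k| ≤ 1 / 2 := abs_le.mpr ⟨by linarith, by linarith⟩
        gcongr
    _ = (b - a) / (2 * n) := by ring

section Halfspace

variable {d : ℕ} {D : Measure (EuclideanSpace ℝ (Fin d))}
  {c : EuclideanSpace ℝ (Fin d) → ℝ}

lemma unf_eq_parityGap [IsFiniteMeasure D] (h : EuclideanSpace ℝ (Fin d) → ℝ) :
    unf D c h = parityGap D {x | c x = 1} {x | h x = 1} := by
  have hle : D.real ({x | c x = 1} ∩ {x | h x = 1}) ≤ D.real {x | h x = 1} :=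
    measureReal_mono Set.inter_subset_right
  change D.real {x | h x = 1} * |D.real {x | c x = 1} -
    D.real ({x | c x = 1} ∩ {x | h x = 1}) / D.real {x | h x = 1}| = _
  rw [parityGap, ← abs_of_nonneg (measureReal_nonneg (μ := D) (s := {x | h x = 1})), ← abs_mul,
    abs_of_nonneg measureReal_nonneg, mul_sub, mul_comm (D.real {x | h x = 1}),
    mul_div_cancel_of_imp']
  exact fun h0 => (hle.trans_eq h0).antisymm measureReal_nonneg

lemma unf_nonneg (h : EuclideanSpace ℝ (Fin d) → ℝ) : 0 ≤ unf D c h :=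
  mul_nonneg ENNReal.toReal_nonneg (abs_nonneg _)

lemma setOf_halfspace_eq_one (w : EuclideanSpace ℝ (Fin d)) (t : ℝ) :
    {x | halfspace w t x = 1} = {x | t ≤ ⟪w, x⟫} := by
  ext x
  by_cases h : t ≤ ⟪w, x⟫ <;> norm_num [halfspace, h]

lemma measurableSet_halfspace_eq_one (w : EuclideanSpace ℝ (Fin d)) (t : ℝ) :
    MeasurableSet {x | halfspace w t x = 1} := by
  rw [setOf_halfspace_eq_one]
  exact measurableSet_le measurable_const (by fun_prop)

lemma setOf_halfspace_eq_one_subset (w : EuclideanSpace ℝ (Fin d)) {s t : ℝ} (hst : s ≤ t) :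
    {x | halfspace w t x = 1} ⊆ {x | halfspace w s x = 1} := by
  simp only [setOf_halfspace_eq_one]
  exact fun x hx => hst.trans hx

/-- The supremum of the weighted unfairness over the halfspaces whose mass lies in `M`, with
value `0` if there are none. The paper's `γ_k` is `supUnf D c {α(k)}` and its `γ*` is
`supUnf D c (Set.Icc a b)`. -/
noncomputable def supUnf (D : Measure (EuclideanSpace ℝ (Fin d)))
    (c : EuclideanSpace ℝ (Fin d) → ℝ) (M : Set ℝ) : ℝ :=
  sSup {r | ∃ w : EuclideanSpace ℝ (Fin d), w ≠ 0 ∧ ∃ t : ℝ,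
    D.real {x | halfspace w t x = 1} ∈ M ∧ r = unf D c (halfspace w t)}

lemma supUnf_nonneg (M : Set ℝ) : 0 ≤ supUnf D c M := by
  refine Real.sSup_nonneg ?_
  rintro _ ⟨w, -, t, -, rfl⟩
  exact unf_nonneg _

variable [IsProbabilityMeasure D]

lemma abs_unf_halfspace_sub_le (w : EuclideanSpace ℝ (Fin d)) (s t : ℝ) :
    |unf D c (halfspace w s) - unf D c (halfspace w t)| ≤
      |D.real {x | halfspace w s x = 1} - D.real {x | halfspace w t x = 1}| := by
  wlog hst : s ≤ t generalizing s t
  · rw [abs_sub_comm, abs_sub_comm (D.real _)]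
    exact this t s (le_of_not_ge hst)
  rw [unf_eq_parityGap, unf_eq_parityGap]
  exact (abs_parityGap_sub_le_of_subset (setOf_halfspace_eq_one_subset w hst)
    (measurableSet_halfspace_eq_one w t)).trans (le_abs_self _)

lemma exists_measureReal_halfspace_eq {w : EuclideanSpace ℝ (Fin d)}
    (hcont : Continuous fun t : ℝ => D.real {x | ⟪-w, x⟫ ≤ t}) {α : ℝ}
    (hα : α ∈ Set.Ioo 0 1) : ∃ t, D.real {x | halfspace w t x = 1} = α := by
  obtain ⟨t, ht⟩ := exists_measureReal_le_eq_of_continuous (by fun_prop) hcont hα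
  refine ⟨-t, ?_⟩
  simpa only [setOf_halfspace_eq_one, inner_neg_left, neg_le] using ht

lemma unf_halfspace_le_supUnf {w : EuclideanSpace ℝ (Fin d)} (hw : w ≠ 0) {t : ℝ} {M : Set ℝ}
    (ht : D.real {x | halfspace w t x = 1} ∈ M) : unf D c (halfspace w t) ≤ supUnf D c M := by
  refine le_csSup ⟨1, ?_⟩ ⟨w, hw, t, ht, rfl⟩
  rintro _ ⟨w', -, t', -, rfl⟩
  rw [unf_eq_parityGap]
  exact parityGap_le_one

lemma unf_halfspace_le_supUnf_singleton_add {w : EuclideanSpace ℝ (Fin d)} (hw : w ≠ 0)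
    (hcont : Continuous fun t : ℝ => D.real {x | ⟪-w, x⟫ ≤ t}) (t : ℝ) {α : ℝ}
    (hα : α ∈ Set.Ioo 0 1) :
    unf D c (halfspace w t) ≤
      supUnf D c {α} + |D.real {x | halfspace w t x = 1} - α| := by
  obtain ⟨s, hs⟩ := exists_measureReal_halfspace_eq hcont hα
  have hlip := abs_unf_halfspace_sub_le (D := D) (c := c) w t s
  rw [hs] at hlip
  linarith [le_abs_self (unf D c (halfspace w t) - unf D c (halfspace w s)),
    unf_halfspace_le_supUnf (c := c) hw (Set.mem_singleton_iff.mpr hs)]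

lemma exists_supUnf_le_supUnf_singleton_add
    (hcont : ∀ u : EuclideanSpace ℝ (Fin d), u ≠ 0 →
      Continuous fun t : ℝ => D.real {x | ⟪u, x⟫ ≤ t})
    {ι : Type*} {s : Finset ι} (hs : s.Nonempty) {α : ι → ℝ}
    (hα : ∀ i ∈ s, α i ∈ Set.Ioo 0 1) {M : Set ℝ} {δ : ℝ} (hδ : 0 ≤ δ)
    (hnet : ∀ m ∈ M, ∃ i ∈ s, |m - α i| ≤ δ) :
    ∃ i ∈ s, supUnf D c M ≤ supUnf D c {α i} + δ := by
  obtain ⟨i, his, hmax⟩ := s.exists_max_image (fun i => supUnf D c {α i}) hs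
  refine ⟨i, his, Real.sSup_le ?_ (add_nonneg (supUnf_nonneg _) hδ)⟩
  rintro _ ⟨w, hw, t, ht, rfl⟩
  obtain ⟨j, hjs, hj⟩ := hnet _ ht
  calc unf D c (halfspace w t)
      ≤ supUnf D c {α j} + |D.real {x | halfspace w t x = 1} - α j| :=
        unf_halfspace_le_supUnf_singleton_add hw (hcont (-w) (neg_ne_zero.mpr hw)) t (hα j hjs)
    _ ≤ supUnf D c {α i} + δ := add_le_add (hmax j hjs) hj

end Halfspace

theorem stmt_15_general {d : ℕ} (D : Measure (EuclideanSpace ℝ (Fin d))) [IsProbabilityMeasure D]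
    (hcont : ∀ u : EuclideanSpace ℝ (Fin d), u ≠ 0 →
      Continuous fun t : ℝ => D.real {x | ⟪u, x⟫ ≤ t})
    (c : EuclideanSpace ℝ (Fin d) → ℝ) {a b : ℝ} (ha : 0 < a) (hab : a ≤ b) (hb : b < 1)
    {n : ℕ} (hn : 0 < n) :
    ∃ k ≤ n, supUnf D c (Set.Icc a b) ≤
      supUnf D c {a + k * (b - a) / n} + (b - a) / (2 * n) := by
  have hmesh : 0 ≤ (b - a) / (2 * n) := div_nonneg (sub_nonneg.mpr hab) (by positivity)
  have hgrid : ∀ k ∈ Finset.Iic n, a + k * (b - a) / n ∈ Set.Ioo 0 1 := fun k hk =>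
    Set.Icc_subset_Ioo ha hb (grid_mem_Icc hab (Finset.mem_Iic.mp hk))
  have hnet : ∀ m ∈ Set.Icc a b, ∃ k ∈ Finset.Iic n,
      |m - (a + k * (b - a) / n)| ≤ (b - a) / (2 * n) := fun m hm => by
    simpa only [Finset.mem_Iic] using exists_abs_sub_grid_le hm hn
  simpa only [Finset.mem_Iic] using
    exists_supUnf_le_supUnf_singleton_add hcont Finset.nonempty_Iic hgrid hmesh hnet

/-- Deterministic correctness core of Theorem 5.1: per-grid-point ε-approximate
maximizers of weighted unfairness yield a certificate within `2(b−a)/n + ε` of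
the most unfair halfspace subgroup of mass between `a` and `b`. -/
theorem stmt_15 {d : ℕ} (D : Measure (EuclideanSpace ℝ (Fin d))) [IsProbabilityMeasure D]
    (hcont : ∀ u : EuclideanSpace ℝ (Fin d), u ≠ 0 →
      Continuous fun t : ℝ => (D {x | ⟪u, x⟫ ≤ t}).toReal)
    (c : EuclideanSpace ℝ (Fin d) → ℝ) (hc : Measurable c)
    (hcval : ∀ x, c x = 1 ∨ c x = -1)
    (a b : ℝ) (ha : 0 < a) (hab : a ≤ b) (hb : b < 1)
    (n : ℕ) (hn : 0 < n) (ε : ℝ) (hε : 0 ≤ ε)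
    (γ : ℕ → ℝ)
    (hγ : ∀ k ≤ n, γ k = sSup {r : ℝ | ∃ w : EuclideanSpace ℝ (Fin d), w ≠ 0 ∧
      ∃ t : ℝ, (D {x | halfspace w t x = 1}).toReal = a + k * (b - a) / n ∧
        r = unf D c (halfspace w t)})
    (γS : ℝ)
    (hγS : γS = sSup {r : ℝ | ∃ w : EuclideanSpace ℝ (Fin d), w ≠ 0 ∧ ∃ t : ℝ,
      a ≤ (D {x | halfspace w t x = 1}).toReal ∧
      (D {x | halfspace w t x = 1}).toReal ≤ b ∧
      r = unf D c (halfspace w t)})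
    (wk : ℕ → EuclideanSpace ℝ (Fin d)) (tk : ℕ → ℝ)
    (hwk : ∀ k ≤ n, wk k ≠ 0)
    (hmassk : ∀ k ≤ n,
      (D {x | halfspace (wk k) (tk k) x = 1}).toReal = a + k * (b - a) / n)
    (happroxk : ∀ k ≤ n, unf D c (halfspace (wk k) (tk k)) ≥ γ k - ε) :
    ∃ k ≤ n, unf D c (halfspace (wk k) (tk k)) ≥ γS - 2 * (b - a) / n - ε := by
  obtain ⟨k, hk, hgap⟩ := stmt_15_general D hcont c ha hab hb hn
  have hγk : γ k = supUnf D c {a + k * (b - a) / n} := hγ k hk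
  have hγS' : γS = supUnf D c (Set.Icc a b) := by
    simp only [hγS, supUnf, Set.mem_Icc, and_assoc, measureReal_def]
  have hmesh : (b - a) / (2 * n) ≤ 2 * (b - a) / n :=
    div_le_div₀ (by linarith) (by linarith) (by positivity) (by linarith [n.cast_nonneg (α := ℝ)])
  exact ⟨k, hk, by linarith [happroxk k hk]⟩
end
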